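/- For every positive integer b there exists a positive integer k = k(b) such that for every finite set A of integers with |A| ≥ 2, either the k-fold sumset satisfies |kA| > |A|^b, or the k-fold product set satisfies |A^{(k)}| > |A|^b. -/

import Mathlib

open Pointwise

namespace KFold

noncomputable def ind (w t : ℝ) : ℝ := Set.indicator (Set.Iic w) (fun _ => (1:ℝ)) t

lemma ind_integrable (w : ℝ) : IntervalIntegrable (ind w) MeasureTheory.volume 0 1 := by
  apply Antitone.intervalIntegrable
  intro a b hab
  unfold ind
  by_cases hb : b ≤ w
  · simp [Set.indicator, hb, hab.trans hb]
  · simp only [Set.indicator, Set.mem_Iic, hb, if_false]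
    split_ifs <;> norm_num

lemma ind_integral (w : ℝ) (hw : 0 ≤ w) : ∫ t in (0:ℝ)..1, ind w t = min w 1 := by
  rw [intervalIntegral.integral_of_le zero_le_one]
  unfold ind
  rw [MeasureTheory.setIntegral_indicator measurableSet_Iic]
  have : Set.Ioc (0:ℝ) 1 ∩ Set.Iic w = Set.Ioc 0 (min w 1) := by
    ext t; simp only [Set.mem_inter_iff, Set.mem_Ioc, Set.mem_Iic, le_min_iff]; tauto
  rw [this]
  simp [hw]

lemma layer (I J : Finset ℕ) (f g h : ℕ → ℝ) (hf : ∀ i ∈ I, 0 ≤ f i ∧ f i ≤ 1)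
    (hg : ∀ i ∈ J, 0 ≤ g i ∧ g i ≤ 1) (i0 j0 : ℕ) (hi0 : i0 ∈ I) (hj0 : j0 ∈ J)
    (hfi : f i0 = 1) (hgj : g j0 = 1) (h0 : ∀ s, 0 ≤ h s)
    (hh : ∀ i ∈ I, ∀ j ∈ J, f i * g j ≤ h (i + j)) :
    ∑ i ∈ I, f i ^ 2 + ∑ j ∈ J, g j ^ 2 - 1 ≤ ∑ s ∈ I + J, h s := by
  have key : ∀ t ∈ Set.Icc (0:ℝ) 1, ∑ i ∈ I, ind (f i ^ 2) t + ∑ j ∈ J, ind (g j ^ 2) t - 1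
      ≤ ∑ s ∈ I + J, ind (h s) t := by
    intro t ht
    have e : ∀ (S : Finset ℕ) (F : ℕ → ℝ), ∑ i ∈ S, ind (F i) t = ((S.filter (fun i => t ≤ F i)).card : ℝ) := by
      intro S F
      simp [ind, Set.indicator, Finset.sum_boole]
    rw [e I (fun i => f i ^ 2), e J (fun i => g i ^ 2), e (I + J) h]
    have hcd := cauchy_davenport_add_of_linearOrder_isCancelAdd
      (s := I.filter (fun i => t ≤ f i ^ 2)) (t := J.filter (fun i => t ≤ g i ^ 2))
      ⟨i0, by simp [hi0, hfi, ht.2]⟩ ⟨j0, by simp [hj0, hgj, ht.2]⟩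
    have hsub : (I.filter (fun i => t ≤ f i ^ 2)) + (J.filter (fun i => t ≤ g i ^ 2)) ⊆
        (I + J).filter (fun i => t ≤ h i) := by
      intro s hs
      obtain ⟨i, hi, j, hj, rfl⟩ := Finset.mem_add.1 hs
      simp only [Finset.mem_filter] at hi hj ⊢
      refine ⟨Finset.add_mem_add hi.1 hj.1, le_trans ?_ (hh i hi.1 j hj.1)⟩
      apply le_of_sq_le_sq _ (mul_nonneg (hf i hi.1).1 (hg j hj.1).1)
      rw [mul_pow, sq]
      exact mul_le_mul hi.2 hj.2 ht.1 (sq_nonneg _)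
    have h2 := hcd.trans (Finset.card_le_card hsub)
    rw [sub_le_iff_le_add]
    have : (I.filter (fun i => t ≤ f i ^ 2)).card + (J.filter (fun i => t ≤ g i ^ 2)).card ≤
      ((I + J).filter (fun i => t ≤ h i)).card + 1 := by omega
    exact_mod_cast this
  have iI : ∀ (S : Finset ℕ) (F : ℕ → ℝ), IntervalIntegrable (fun t => ∑ i ∈ S, ind (F i) t)
      MeasureTheory.volume 0 1 := by
    intro S F
    have e : (fun t => ∑ i ∈ S, ind (F i) t) = ∑ i ∈ S, (fun t => ind (F i) t) := by
      funext t; simp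
    rw [e]
    exact IntervalIntegrable.sum S (fun i _ => ind_integrable _)
  have vI : ∀ (S : Finset ℕ) (F : ℕ → ℝ), (∀ i ∈ S, 0 ≤ F i) →
      ∫ t in (0:ℝ)..1, ∑ i ∈ S, ind (F i) t = ∑ i ∈ S, min (F i) 1 := by
    intro S F hF
    rw [intervalIntegral.integral_finsetSum (fun i _ => ind_integrable _)]
    exact Finset.sum_congr rfl fun i hi => ind_integral _ (hF i hi)
  have mono := intervalIntegral.integral_mono_on zero_le_one
    (((iI I (fun i => f i ^ 2)).add (iI J (fun i => g i ^ 2))).sub (intervalIntegrable_const (c := (1:ℝ))))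
    (iI (I + J) h) key
  rw [intervalIntegral.integral_sub ((iI I (fun i => f i ^ 2)).add (iI J (fun i => g i ^ 2))) (intervalIntegrable_const (c := (1:ℝ))),
    intervalIntegral.integral_add (iI I (fun i => f i ^ 2)) (iI J (fun i => g i ^ 2)),
    vI _ _ (fun i _ => sq_nonneg _), vI _ _ (fun i _ => sq_nonneg _), vI _ _ (fun i _ => h0 _)] at mono
  have a1 : ∑ i ∈ I, min (f i ^ 2) 1 = ∑ i ∈ I, f i ^ 2 :=
    Finset.sum_congr rfl fun i hi => min_eq_left (pow_le_one₀ (hf i hi).1 (hf i hi).2)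
  have a2 : ∑ i ∈ J, min (g i ^ 2) 1 = ∑ i ∈ J, g i ^ 2 :=
    Finset.sum_congr rfl fun i hi => min_eq_left (pow_le_one₀ (hg i hi).1 (hg i hi).2)
  have a3 : ∑ s ∈ I + J, min (h s) 1 ≤ ∑ s ∈ I + J, h s :=
    Finset.sum_le_sum fun i _ => min_le_left _ _
  rw [a1, a2] at mono
  simp at mono
  linarith

/-- the trichotomy for one side -/
def Tri (I : Finset ℕ) (f : ℕ → ℝ) (α : ℝ) : Prop :=
  (1 ≤ α * ∑ i ∈ I, f i ∧ 1 ≤ 25 / 24 * α ^ 2) ∨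
  (1 ≤ 2 * ∑ i ∈ I, f i ^ 2 - α ^ 2 ∧ 1 ≤ α * ∑ i ∈ I, f i) ∨
  (1 ≤ 2 * ∑ i ∈ I, f i ^ 2 - α ^ 2 ∧ 5 / 4 * α ^ 2 ≤ ∑ i ∈ I, f i ^ 2)

lemma mixed {α β x y H : ℝ} (hα : 0 < α) (hβ : 0 < β)
    (h1 : 1 ≤ 25 / 24 * α ^ 2) (hx : α ^ 2 ≤ x) (h2 : 1 ≤ 2 * y - β ^ 2)
    (h3 : 5 / 4 * β ^ 2 ≤ y) (hH : x / α ^ 2 + y / β ^ 2 - 1 ≤ H / (α * β)) : 1 ≤ H := by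
  have hx1 : 1 ≤ x / α ^ 2 := by rw [le_div_iff₀ (by positivity)]; linarith
  have : y / β ^ 2 ≤ H / (α * β) := by linarith
  rw [div_le_div_iff₀ (by positivity) (by positivity)] at this
  have h4 : y * α ≤ H * β := by
    have : β * (y * α) ≤ β * (H * β) := by nlinarith
    exact le_of_mul_le_mul_left this hβ
  have hy : 0 < y := by nlinarith [sq_nonneg β]
  -- y^2 ≥ 25/24 β²
  have h5 : 25 / 24 * β ^ 2 ≤ y ^ 2 := by
    have hb2 : 0 < β ^ 2 := by positivity
    -- y ≥ (1+b)/2, y ≥ 5/4 b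
    rcases le_total (β ^ 2) (2 / 3) with hc | hc
    · nlinarith
    · nlinarith
  have h6 : (β * 1) ^ 2 ≤ (H * β) ^ 2 := by
    have : (y * α) ^ 2 ≤ (H * β) ^ 2 := pow_le_pow_left₀ (by positivity) h4 2
    have h7 : β ^ 2 ≤ (y * α) ^ 2 := by
      rw [mul_pow]
      nlinarith [sq_nonneg β, sq_nonneg α]
    nlinarith
  have hHb : 0 ≤ H * β := le_trans (by positivity) h4
  have := le_of_sq_le_sq h6 hHb
  nlinarith

lemma PL (I J : Finset ℕ) (f g h : ℕ → ℝ) (α β : ℝ) (hα : 0 < α) (hβ : 0 < β)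
    (hf : ∀ i ∈ I, 0 ≤ f i ∧ f i ≤ α)
    (hg : ∀ i ∈ J, 0 ≤ g i ∧ g i ≤ β) (i0 j0 : ℕ) (hi0 : i0 ∈ I) (hj0 : j0 ∈ J)
    (hfi : f i0 = α) (hgj : g j0 = β) (h0 : ∀ s, 0 ≤ h s)
    (hh : ∀ i ∈ I, ∀ j ∈ J, f i * g j ≤ h (i + j)) (tf : Tri I f α) (tg : Tri J g β) :
    1 ≤ ∑ s ∈ I + J, h s := by
  set H := ∑ s ∈ I + J, h s with hH
  have b1 : α * ∑ j ∈ J, g j ≤ H := by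
    calc α * ∑ j ∈ J, g j = ∑ j ∈ J, f i0 * g j := by rw [hfi, Finset.mul_sum]
      _ ≤ ∑ j ∈ J, h (i0 + j) := Finset.sum_le_sum fun j hj => hh _ hi0 _ hj
      _ = ∑ s ∈ J.map (addLeftEmbedding i0), h s := by simp
      _ ≤ H := by
        apply Finset.sum_le_sum_of_subset_of_nonneg
        · intro s hs
          simp only [Finset.mem_map, addLeftEmbedding_apply] at hs
          obtain ⟨j, hj, rfl⟩ := hs
          exact Finset.add_mem_add hi0 hj
        · intros; exact h0 _
  have b2 : β * ∑ j ∈ I, f j ≤ H := by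
    calc β * ∑ j ∈ I, f j = ∑ j ∈ I, f j * g j0 := by rw [hgj, Finset.mul_sum]; simp [mul_comm]
      _ ≤ ∑ j ∈ I, h (j + j0) := Finset.sum_le_sum fun j hj => hh _ hj _ hj0
      _ = ∑ s ∈ I.map (addRightEmbedding j0), h s := by simp
      _ ≤ H := by
        apply Finset.sum_le_sum_of_subset_of_nonneg
        · intro s hs
          simp only [Finset.mem_map, addRightEmbedding_apply] at hs
          obtain ⟨j, hj, rfl⟩ := hs
          exact Finset.add_mem_add hj hj0
        · intros; exact h0 _
  have b3 : (∑ i ∈ I, f i ^ 2) / α ^ 2 + (∑ j ∈ J, g j ^ 2) / β ^ 2 - 1 ≤ H / (α * β) := by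
    have := layer I J (fun i => f i / α) (fun j => g j / β) (fun s => h s / (α * β))
      (fun i hi => ⟨div_nonneg (hf i hi).1 hα.le, (div_le_one hα).2 (hf i hi).2⟩)
      (fun i hi => ⟨div_nonneg (hg i hi).1 hβ.le, (div_le_one hβ).2 (hg i hi).2⟩)
      i0 j0 hi0 hj0 (by simp [hfi, hα.ne']) (by simp [hgj, hβ.ne'])
      (fun s => div_nonneg (h0 s) (by positivity))
      (fun i hi j hj => by rw [div_mul_div_comm]; exact div_le_div_of_nonneg_right (hh i hi j hj) (by positivity))
    simpa only [div_pow, ← Finset.sum_div] using this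
  have x1 : α ^ 2 ≤ ∑ i ∈ I, f i ^ 2 := by
    rw [← hfi]; exact Finset.single_le_sum (f := fun i => f i ^ 2) (fun i _ => sq_nonneg _) hi0
  have y1 : β ^ 2 ≤ ∑ i ∈ J, g i ^ 2 := by
    rw [← hgj]; exact Finset.single_le_sum (f := fun i => g i ^ 2) (fun i _ => sq_nonneg _) hj0
  have c1 : 1 ≤ α * ∑ i ∈ I, f i → 1 ≤ β * ∑ i ∈ J, g i → 1 ≤ H := by
    intro p q
    have sf : 0 ≤ ∑ i ∈ I, f i := Finset.sum_nonneg fun i hi => (hf i hi).1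
    have sg : 0 ≤ ∑ i ∈ J, g i := Finset.sum_nonneg fun i hi => (hg i hi).1
    have : 1 * 1 ≤ H * H := by
      calc (1:ℝ) * 1 ≤ (α * ∑ i ∈ I, f i) * (β * ∑ i ∈ J, g i) := mul_le_mul p q (by norm_num) (by positivity)
        _ = (α * ∑ j ∈ J, g j) * (β * ∑ j ∈ I, f j) := by ring
        _ ≤ H * H := mul_le_mul b1 b2 (by positivity) (le_trans (by positivity) b1)
    have hH0 : 0 ≤ H := le_trans (by positivity) b1
    nlinarith
  have c2 : 1 ≤ 2 * ∑ i ∈ I, f i ^ 2 - α ^ 2 → 1 ≤ 2 * ∑ i ∈ J, g i ^ 2 - β ^ 2 → 1 ≤ H := by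
    intro p q
    have p' : (1 + α ^ 2) / 2 / α ^ 2 ≤ (∑ i ∈ I, f i ^ 2) / α ^ 2 :=
      div_le_div_of_nonneg_right (by linarith) (by positivity)
    have q' : (1 + β ^ 2) / 2 / β ^ 2 ≤ (∑ i ∈ J, g i ^ 2) / β ^ 2 :=
      div_le_div_of_nonneg_right (by linarith) (by positivity)
    have : (1 + α ^ 2) / 2 / α ^ 2 + (1 + β ^ 2) / 2 / β ^ 2 - 1 ≤ H / (α * β) := by linarith
    have e : (1 + α ^ 2) / 2 / α ^ 2 + (1 + β ^ 2) / 2 / β ^ 2 - 1 = (α ^ 2 + β ^ 2) / (2 * (α * β)) / (α * β) := by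
      field_simp; ring
    rw [e, div_le_div_iff_of_pos_right (by positivity)] at this
    refine le_trans ?_ this
    rw [le_div_iff₀ (by positivity)]
    nlinarith [sq_nonneg (α - β)]
  rcases tf with ⟨f1, f2⟩ | ⟨f1, f2⟩ | ⟨f1, f2⟩ <;> rcases tg with ⟨g1, g2⟩ | ⟨g1, g2⟩ | ⟨g1, g2⟩
  · exact c1 f1 g1
  · exact c1 f1 g2
  · exact mixed hα hβ f2 x1 g1 g2 b3
  · exact c1 f2 g1
  · exact c2 f1 g1
  · exact c2 f1 g1
  · refine mixed hβ hα g2 y1 f1 f2 ?_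
    rw [mul_comm β α]; linarith
  · exact c2 f1 g1
  · exact c2 f1 g1


lemma rpow_three {a : ℝ} (ha : 0 < a) (h : a ≤ 1 / 100) : 3 * a ≤ a ^ (3 / 4 : ℝ) := by
  set y := a ^ (1 / 4 : ℝ) with hy
  have y0 : 0 < y := Real.rpow_pos_of_pos ha _
  have y4 : y ^ 4 = a := by
    rw [hy, ← Real.rpow_natCast, ← Real.rpow_mul ha.le]; norm_num
  have y3 : a ^ (3 / 4 : ℝ) = y ^ 3 := by
    rw [hy, ← Real.rpow_natCast, ← Real.rpow_mul ha.le]; norm_num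
  rw [y3]
  have : y ≤ 1 / 3 := by
    by_contra hcon
    push Not at hcon
    have : (1 / 3 : ℝ) ^ 4 < y ^ 4 := pow_lt_pow_left₀ hcon (by norm_num) (by norm_num)
    rw [y4] at this
    norm_num at this
    linarith
  nlinarith [pow_pos y0 3]

lemma u_sq {a g c : ℝ} (ha : 0 < a) (hg : 0 < g) (hc : 0 ≤ c) :
    a + 2 * c * (a - g) ≤ (a ^ (1 / 2 + c) * g ^ (-c)) ^ 2 := by
  have e : (a ^ (1 / 2 + c) * g ^ (-c)) ^ 2 = a * Real.exp (2 * c * Real.log (a / g)) := by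
    rw [Real.rpow_def_of_pos ha, Real.rpow_def_of_pos hg, ← Real.exp_add, ← Real.exp_nat_mul,
      Real.log_div ha.ne' hg.ne']
    nth_rewrite 2 [← Real.exp_log ha]
    rw [← Real.exp_add]
    congr 1
    push_cast
    ring
  rw [e]
  have h1 : 2 * c * Real.log (a / g) + 1 ≤ Real.exp (2 * c * Real.log (a / g)) := Real.add_one_le_exp _
  have h2 : 1 - (a / g)⁻¹ ≤ Real.log (a / g) := Real.one_sub_inv_le_log_of_pos (by positivity)
  have h3 : a * (1 - (a / g)⁻¹) = a - g := by field_simp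
  have h4 : a - g ≤ a * Real.log (a / g) := by rw [← h3]; exact mul_le_mul_of_nonneg_left h2 ha.le
  have h5 := mul_le_mul_of_nonneg_left h1 ha.le
  nlinarith

lemma one_set (I : Finset ℕ) (a g u : ℕ → ℝ) (M c : ℝ) (hM : 1 ≤ M) (hc : c = 1 / (400 * (M + 1)))
    (ha : ∀ i ∈ I, 0 < a i) (hg : ∀ i ∈ I, 0 < g i) (hg1 : ∀ i ∈ I, g i ≤ 1)
    (hsum : ∑ i ∈ I, a i = 1) (hlight : ∑ i ∈ I.filter (fun i => a i * M ≤ 1), g i ≤ 1)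
    (hu : ∀ i ∈ I, u i = a i ^ (1 / 2 + c) * g i ^ (-c)) (α : ℝ) (i0 : ℕ) (hi0 : i0 ∈ I)
    (hα : u i0 = α) (hmax : ∀ i ∈ I, u i ≤ α) : Tri I u α := by
  have hc0 : 0 < c := by rw [hc]; positivity
  have hc1 : c ≤ 1 / 4 := by
    rw [hc, div_le_div_iff₀ (by positivity) (by norm_num)]; linarith
  have ha1 : ∀ i ∈ I, a i ≤ 1 := fun i hi => by
    rw [← hsum]; exact Finset.single_le_sum (fun i hi => (ha i hi).le) hi
  have hu0 : ∀ i ∈ I, 0 < u i := fun i hi => by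
    rw [hu i hi]; exact mul_pos (Real.rpow_pos_of_pos (ha i hi) _) (Real.rpow_pos_of_pos (hg i hi) _)
  have hlow : ∀ i ∈ I, a i ^ (1 / 2 + c) ≤ u i := fun i hi => by
    rw [hu i hi]
    apply le_mul_of_one_le_right (Real.rpow_pos_of_pos (ha i hi) _).le
    exact Real.one_le_rpow_of_pos_of_le_one_of_nonpos (hg i hi) (hg1 i hi) (by linarith)
  have hlow1 : ∀ i ∈ I, a i ≤ u i := fun i hi => by
    refine le_trans ?_ (hlow i hi)
    conv_lhs => rw [← Real.rpow_one (a i)]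
    exact Real.rpow_le_rpow_of_exponent_ge (ha i hi) (ha1 i hi) (by linarith)
  have hlow3 : ∀ i ∈ I, a i ≤ 1 / 100 → 3 * a i ≤ u i := fun i hi h => by
    refine le_trans (rpow_three (ha i hi) h) (le_trans ?_ (hlow i hi))
    exact Real.rpow_le_rpow_of_exponent_ge (ha i hi) (ha1 i hi) (by linarith)
  have hα0 : 0 < α := hα ▸ hu0 i0 hi0
  have H : ∀ S ⊆ I, ∑ i ∈ S, a i - 1 / 200 ≤ ∑ i ∈ S, u i ^ 2 := by
    intro S hS
    have hp : ∀ i ∈ S, a i - 2 * c * ((if a i * M ≤ 1 then g i else 0) + M * a i) ≤ u i ^ 2 := by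
      intro i hi
      have hiI := hS hi
      rw [hu i hiI]
      refine le_trans ?_ (u_sq (ha i hiI) (hg i hiI) hc0.le)
      have := ha i hiI
      have := hg1 i hiI
      have hMa : 0 < M * a i := by positivity
      split_ifs with hl
      · nlinarith
      · nlinarith
    have s1 : ∑ i ∈ S, (if a i * M ≤ 1 then g i else 0) ≤ 1 := by
      rw [← Finset.sum_filter]
      refine le_trans (Finset.sum_le_sum_of_subset_of_nonneg (Finset.filter_subset_filter _ hS) ?_) hlight
      intro i hi _
      exact (hg i (Finset.mem_filter.1 hi).1).le
    have s2 : ∑ i ∈ S, a i ≤ 1 := by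
      rw [← hsum]
      exact Finset.sum_le_sum_of_subset_of_nonneg hS fun i hi _ => (ha i hi).le
    have := Finset.sum_le_sum hp
    rw [Finset.sum_sub_distrib, ← Finset.mul_sum, Finset.sum_add_distrib, ← Finset.mul_sum] at this
    have e : 2 * c * (1 + M) = 1 / 200 := by rw [hc]; field_simp; ring
    have : 2 * c * (∑ i ∈ S, (if a i * M ≤ 1 then g i else 0) + M * ∑ i ∈ S, a i) ≤ 2 * c * (1 + M) := by
      apply mul_le_mul_of_nonneg_left _ (by linarith)
      nlinarith
    linarith
  by_cases hk : ∃ k ∈ I, 99 / 100 ≤ a k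
  · obtain ⟨k, hkI, hk⟩ := hk
    left
    have r : ∑ i ∈ I.erase k, a i = 1 - a k := by
      rw [← hsum, ← Finset.add_sum_erase _ _ hkI]; ring
    have r2 : 3 * (1 - a k) ≤ ∑ i ∈ I.erase k, u i := by
      rw [← r, Finset.mul_sum]
      apply Finset.sum_le_sum
      intro i hi
      have hiI := Finset.mem_of_mem_erase hi
      apply hlow3 i hiI
      have : a i ≤ ∑ i ∈ I.erase k, a i :=
        Finset.single_le_sum (fun j hj => (ha j (Finset.mem_of_mem_erase hj)).le) hi
      linarith
    have r3 : a k + 3 * (1 - a k) ≤ ∑ i ∈ I, u i := by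
      rw [← Finset.add_sum_erase _ _ hkI]
      have := hlow1 k hkI
      linarith
    have r4 : a k ≤ α := (hlow1 k hkI).trans (hmax k hkI)
    have := ha1 k hkI
    constructor
    · calc 1 ≤ a k * (a k + 3 * (1 - a k)) := by nlinarith
        _ ≤ α * ∑ i ∈ I, u i := mul_le_mul r4 r3 (by linarith) hα0.le
    · nlinarith
  · push Not at hk
    right
    have e2 : ∑ i ∈ I, u i ^ 2 = α ^ 2 + ∑ i ∈ I.erase i0, u i ^ 2 := by
      rw [← Finset.add_sum_erase _ _ hi0, hα]
    have e1 : ∑ i ∈ I, u i = α + ∑ i ∈ I.erase i0, u i := by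
      rw [← Finset.add_sum_erase _ _ hi0, hα]
    have ea : ∑ i ∈ I.erase i0, a i = 1 - a i0 := by
      rw [← hsum, ← Finset.add_sum_erase _ _ hi0]; ring
    have H1 := H I subset_rfl
    have H2 := H _ (Finset.erase_subset i0 I)
    have hk0 := hk i0 hi0
    have main : 1 ≤ 2 * ∑ i ∈ I, u i ^ 2 - α ^ 2 := by linarith
    by_cases hs : ∃ i ∈ I.erase i0, α / 2 < u i
    · right
      refine ⟨main, ?_⟩
      obtain ⟨i, hi, hiu⟩ := hs
      have : u i ^ 2 ≤ ∑ i ∈ I.erase i0, u i ^ 2 :=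
        Finset.single_le_sum (f := fun i => u i ^ 2) (fun j _ => sq_nonneg _) hi
      nlinarith
    · left
      refine ⟨main, main.trans ?_⟩
      push Not at hs
      have : 2 * ∑ i ∈ I.erase i0, u i ^ 2 ≤ α * ∑ i ∈ I.erase i0, u i := by
        rw [Finset.mul_sum, Finset.mul_sum]
        apply Finset.sum_le_sum
        intro i hi
        have := hs i hi
        have := hu0 i (Finset.mem_of_mem_erase hi)
        nlinarith
      rw [e1, e2]
      nlinarith


/-- fibre of the `p`-adic valuation -/
def fib (p : ℕ) (A : Finset ℕ) (i : ℕ) : Finset ℕ := A.filter (fun x => x.factorization p = i)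

lemma mem_fib {p : ℕ} {A : Finset ℕ} {i x : ℕ} :
    x ∈ fib p A i ↔ x ∈ A ∧ x.factorization p = i := by simp [fib]

lemma fib_subset (p : ℕ) (A : Finset ℕ) (i : ℕ) : fib p A i ⊆ A := Finset.filter_subset _ _

/-- query complexity at most `n` -/
inductive QC : ℕ → Finset ℕ → Prop
  | single (n : ℕ) (A : Finset ℕ) (h : A.card ≤ 1) : QC n A
  | step (n p : ℕ) (A : Finset ℕ) (hp : p.Prime) (h : ∀ i, QC n (fib p A i)) : QC (n + 1) A

lemma QC.mono {n : ℕ} {A : Finset ℕ} (h : QC n A) : ∀ {m : ℕ} {B : Finset ℕ}, n ≤ m → B ⊆ A → QC m B := by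
  induction h with
  | single n A h => intro m B _ hB; exact QC.single _ _ ((Finset.card_le_card hB).trans h)
  | step n p A hp h ih =>
    intro m B hm hB
    obtain ⟨m, rfl⟩ : ∃ k, m = k + 1 := ⟨m - 1, by omega⟩
    exact QC.step m p B hp fun i => ih i (by omega) (Finset.filter_subset_filter _ hB)

lemma QC.refl {n : ℕ} {B : Finset ℕ} (h : QC n B) : ∀ {A : Finset ℕ} {z : ℕ} (_ : z ≠ 0) (ψ : ℕ → ℕ)
    (_ : ∀ a ∈ A, ψ a ∈ B ∧ a * ψ a = z), QC n A := by
  induction h with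
  | single n B h =>
    intro A z hz ψ hψ
    apply QC.single
    rw [Finset.card_le_one] at h ⊢
    intro a ha b hb
    have e := h _ (hψ a ha).1 _ (hψ b hb).1
    have h1 := (hψ a ha).2
    have h2 := (hψ b hb).2
    rw [← e, ← h1] at h2
    have : ψ a ≠ 0 := by
      intro h0; rw [h0, mul_zero] at h1; exact hz h1.symm
    exact (Nat.eq_of_mul_eq_mul_right (Nat.pos_of_ne_zero this) h2).symm
  | step n p B hp h ih =>
    intro A z hz ψ hψ
    apply QC.step n p A hp
    intro i
    apply ih (z.factorization p - i) hz ψ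
    intro a ha
    rw [mem_fib] at ha
    obtain ⟨h1, h2⟩ := hψ a ha.1
    refine ⟨mem_fib.2 ⟨h1, ?_⟩, h2⟩
    have ha0 : a ≠ 0 := by rintro rfl; simp at h2; exact hz h2.symm
    have hb0 : ψ a ≠ 0 := by intro h0; rw [h0] at h2; simp at h2; exact hz h2.symm
    rw [← h2, Nat.factorization_mul ha0 hb0]
    simp [ha.2]

open Classical in
noncomputable def G (M : ℕ) (A : Finset ℕ) : ℕ :=
  (A.powerset.filter (QC (Nat.log M A.card))).sup Finset.card

lemma le_G {M : ℕ} {A B : Finset ℕ} (h : B ⊆ A) (hq : QC (Nat.log M A.card) B) : B.card ≤ G M A := by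
  classical
  unfold G
  exact Finset.le_sup (f := Finset.card) (by simp [h, hq])

lemma exists_G (M : ℕ) (A : Finset ℕ) : ∃ B ⊆ A, QC (Nat.log M A.card) B ∧ B.card = G M A := by
  classical
  unfold G
  obtain ⟨B, hB, h⟩ := Finset.exists_mem_eq_sup (A.powerset.filter (QC (Nat.log M A.card)))
    ⟨∅, by simp; exact QC.single _ _ (by simp)⟩ Finset.card
  simp only [Finset.mem_filter, Finset.mem_powerset] at hB
  exact ⟨B, hB.1, hB.2, h.symm⟩

lemma G_pos (M : ℕ) {A : Finset ℕ} (h : A.Nonempty) : 0 < G M A := by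
  obtain ⟨a, ha⟩ := h
  have := le_G (M := M) (A := A) (B := {a}) (by simpa using ha) (QC.single _ _ (by simp))
  simp at this
  omega

lemma G_le_card (M : ℕ) (A : Finset ℕ) : G M A ≤ A.card := by
  obtain ⟨B, h, _, e⟩ := exists_G M A
  rw [← e]; exact Finset.card_le_card h

lemma G_mono (M : ℕ) {A B : Finset ℕ} (h : A ⊆ B) : G M A ≤ G M B := by
  obtain ⟨C, h1, h2, e⟩ := exists_G M A
  rw [← e]
  exact le_G (h1.trans h) (h2.mono (Nat.log_mono_right (Finset.card_le_card h)) subset_rfl)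

lemma G_light (M : ℕ) (hM : 2 ≤ M) (A : Finset ℕ) (p : ℕ) (hp : p.Prime) (S : Finset ℕ)
    (hS : ∀ i ∈ S, (fib p A i).card * M ≤ A.card) (hne : ∀ i ∈ S, (fib p A i).Nonempty) :
    ∑ i ∈ S, G M (fib p A i) ≤ G M A := by
  choose B h1 h2 h3 using fun i => exists_G M (fib p A i)
  rcases S.eq_empty_or_nonempty with rfl | ⟨i1, hi1⟩
  · simp
  have hlog : ∀ i ∈ S, Nat.log M (fib p A i).card + 1 ≤ Nat.log M A.card := by
    intro i hi
    rw [← Nat.log_mul_base (by omega) (Finset.card_pos.2 (hne i hi)).ne']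
    exact Nat.log_mono_right (hS i hi)
  have hdisj : (S : Set ℕ).PairwiseDisjoint B := by
    intro i _ j _ hij
    rw [Function.onFun, Finset.disjoint_left]
    intro x hx hy
    have a1 := (mem_fib.1 (h1 i hx)).2
    have a2 := (mem_fib.1 (h1 j hy)).2
    exact hij (a1.symm.trans a2)
  have e : ∑ i ∈ S, G M (fib p A i) = (S.biUnion B).card := by
    rw [Finset.card_biUnion hdisj]
    exact Finset.sum_congr rfl fun i _ => (h3 i).symm
  rw [e]
  apply le_G
  · intro x hx
    obtain ⟨i, _, hx⟩ := Finset.mem_biUnion.1 hx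
    exact fib_subset _ _ _ (h1 i hx)
  · obtain ⟨n, hn⟩ : ∃ n, Nat.log M A.card = n + 1 := ⟨Nat.log M A.card - 1, by have := hlog i1 hi1; omega⟩
    rw [hn]
    apply QC.step n p _ hp
    intro i
    by_cases hi : i ∈ S
    · apply (h2 i).mono (by have := hlog i hi; omega)
      intro x hx
      rw [mem_fib, Finset.mem_biUnion] at hx
      obtain ⟨⟨j, hj, hx⟩, hxi⟩ := hx
      have := (mem_fib.1 (h1 j hx)).2
      rw [← hxi, this]; exact hx
    · apply QC.single
      have : fib p (S.biUnion B) i = ∅ := by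
        rw [Finset.eq_empty_iff_forall_notMem]
        intro x hx
        rw [mem_fib, Finset.mem_biUnion] at hx
        obtain ⟨⟨j, hj, hx⟩, hxi⟩ := hx
        have := (mem_fib.1 (h1 j hx)).2
        rw [← hxi, this] at hi
        exact hi hj
      simp [this]

noncomputable def F (M : ℕ) (c : ℝ) (A : Finset ℕ) : ℝ := (A.card : ℝ) ^ (1 / 2 + c) * (G M A : ℝ) ^ (-c)

lemma F_pos (M : ℕ) (c : ℝ) {A : Finset ℕ} (h : A.Nonempty) : 0 < F M c A := by
  have h1 : (0:ℝ) < A.card := by exact_mod_cast Finset.card_pos.2 h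
  have h2 : (0:ℝ) < G M A := by exact_mod_cast G_pos M h
  unfold F; positivity

/-- one-sided data for a single prime -/
lemma side (M : ℕ) (hM : 2 ≤ M) (c : ℝ) (hc : c = 1 / (400 * ((M:ℝ) + 1))) (p : ℕ) (hp : p.Prime)
    (A : Finset ℕ) (hA : A.Nonempty) :
    ∃ i0 ∈ A.image (fun x => x.factorization p),
      (∀ i ∈ A.image (fun x => x.factorization p), F M c (fib p A i) / F M c A ≤ F M c (fib p A i0) / F M c A) ∧
      Tri (A.image (fun x => x.factorization p)) (fun i => F M c (fib p A i) / F M c A)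
        (F M c (fib p A i0) / F M c A) := by
  set I := A.image (fun x => x.factorization p) with hI
  obtain ⟨i0, hi0, hmax⟩ := Finset.exists_max_image I (fun i => F M c (fib p A i) / F M c A)
    (hA.image _)
  refine ⟨i0, hi0, hmax, ?_⟩
  have hne : ∀ i ∈ I, (fib p A i).Nonempty := by
    intro i hi
    obtain ⟨x, hx, hxi⟩ := Finset.mem_image.1 hi
    exact ⟨x, mem_fib.2 ⟨hx, hxi⟩⟩
  have hA0 : (0:ℝ) < A.card := by exact_mod_cast Finset.card_pos.2 hA
  have hG0 : (0:ℝ) < G M A := by exact_mod_cast G_pos M hA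
  have hAi : ∀ i ∈ I, (0:ℝ) < (fib p A i).card := fun i hi => by exact_mod_cast Finset.card_pos.2 (hne i hi)
  have hGi : ∀ i ∈ I, (0:ℝ) < G M (fib p A i) := fun i hi => by exact_mod_cast G_pos M (hne i hi)
  apply one_set I (fun i => ((fib p A i).card : ℝ) / A.card) (fun i => (G M (fib p A i) : ℝ) / G M A) _
    M c (by exact_mod_cast (by omega : 1 ≤ M)) hc (fun i hi => div_pos (hAi i hi) hA0)
    (fun i hi => div_pos (hGi i hi) hG0) _ _ _ _ _ i0 hi0 rfl hmax
  · intro i hi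
    rw [div_le_one hG0]
    exact_mod_cast G_mono M (fib_subset _ _ _)
  · rw [← Finset.sum_div, div_eq_one_iff_eq hA0.ne']
    have := Finset.card_eq_sum_card_image (fun x : ℕ => x.factorization p) A
    rw [this]
    push_cast
    rfl
  · rw [← Finset.sum_div, div_le_one hG0]
    have := G_light M hM A p hp (I.filter (fun i => ((fib p A i).card : ℝ) / A.card * M ≤ 1))
      (by
        intro i hi
        have := (Finset.mem_filter.1 hi).2
        rw [div_mul_eq_mul_div, div_le_one hA0] at this
        exact_mod_cast this)
      (fun i hi => hne i (Finset.mem_filter.1 hi).1)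
    exact_mod_cast this
  · intro i hi
    have := hAi i hi
    have := hGi i hi
    simp only [F]
    rw [Real.div_rpow (by positivity) (by positivity), Real.div_rpow (by positivity) (by positivity),
      mul_div_mul_comm]

theorem tree (M : ℕ) (hM : 2 ≤ M) (c : ℝ) (hc : c = 1 / (400 * ((M:ℝ) + 1))) (P : Finset ℕ) :
    (∀ p ∈ P, p.Prime) → ∀ A B : Finset ℕ, A.Nonempty → B.Nonempty → 0 ∉ A → 0 ∉ B →
    (∀ x ∈ A, ∀ y ∈ A, ∀ q ∉ P, x.factorization q = y.factorization q) →
    (∀ x ∈ B, ∀ y ∈ B, ∀ q ∉ P, x.factorization q = y.factorization q) →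
    F M c A * F M c B ≤ ((A * B).card : ℝ) := by
  induction P using Finset.induction_on with
  | empty =>
    intro _ A B hA hB hA0 hB0 h1 h2
    have key : ∀ C : Finset ℕ, C.Nonempty → 0 ∉ C →
        (∀ x ∈ C, ∀ y ∈ C, ∀ q ∉ (∅ : Finset ℕ), x.factorization q = y.factorization q) → F M c C = 1 := by
      intro C hC hC0 h
      have hc1 : C.card = 1 := by
        apply le_antisymm _ (Finset.card_pos.2 hC)
        rw [Finset.card_le_one]
        intro a ha b hb
        apply Nat.eq_of_factorization_eq (by rintro rfl; exact hC0 ha) (by rintro rfl; exact hC0 hb)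
        intro q
        exact h a ha b hb q (by simp)
      have g1 : G M C = 1 := le_antisymm (hc1 ▸ G_le_card M C) (G_pos M hC)
      simp [F, hc1, g1]
    rw [key A hA hA0 h1, key B hB hB0 h2]
    have : 0 < (A * B).card := Finset.card_pos.2 (hA.mul hB)
    norm_num
    exact ⟨hA, hB⟩
  | insert p P hpP ih =>
    intro hP A B hA hB hA0 hB0 h1 h2
    have hp : p.Prime := hP p (by simp)
    have hFA := F_pos M c hA
    have hFB := F_pos M c hB
    obtain ⟨i0, hi0, hmi, ti⟩ := side M hM c hc p hp A hA
    obtain ⟨j0, hj0, hmj, tj⟩ := side M hM c hc p hp B hB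
    have hne : ∀ C : Finset ℕ, ∀ i ∈ C.image (fun x => x.factorization p), (fib p C i).Nonempty := by
      intro C i hi
      obtain ⟨x, hx, hxi⟩ := Finset.mem_image.1 hi
      exact ⟨x, mem_fib.2 ⟨hx, hxi⟩⟩
    have hagree : ∀ C : Finset ℕ, (∀ x ∈ C, ∀ y ∈ C, ∀ q ∉ insert p P, x.factorization q = y.factorization q) →
        ∀ i, ∀ x ∈ fib p C i, ∀ y ∈ fib p C i, ∀ q ∉ P, x.factorization q = y.factorization q := by
      intro C hC i x hx y hy q hq
      rw [mem_fib] at hx hy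
      by_cases hqp : q = p
      · subst hqp; rw [hx.2, hy.2]
      · exact hC x hx.1 y hy.1 q (by simp [hqp, hq])
    have := PL _ _ _ _ (fun s => ((fib p (A * B) s).card : ℝ) / (F M c A * F M c B)) _ _
      (div_pos (F_pos M c (hne A i0 hi0)) hFA) (div_pos (F_pos M c (hne B j0 hj0)) hFB)
      (fun i hi => ⟨(div_pos (F_pos M c (hne A i hi)) hFA).le, hmi i hi⟩)
      (fun i hi => ⟨(div_pos (F_pos M c (hne B i hi)) hFB).le, hmj i hi⟩)
      i0 j0 hi0 hj0 rfl rfl (fun s => by positivity)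
      (by
        intro i hi j hj
        rw [div_mul_div_comm]
        apply div_le_div_of_nonneg_right _ (by positivity)
        refine le_trans (ih (fun q hq => hP q (by simp [hq])) (fib p A i) (fib p B j) (hne A i hi) (hne B j hj)
          (fun h => hA0 (fib_subset _ _ _ h)) (fun h => hB0 (fib_subset _ _ _ h))
          (hagree A h1 i) (hagree B h2 j)) ?_
        have : fib p A i * fib p B j ⊆ fib p (A * B) (i + j) := by
          intro z hz
          obtain ⟨x, hx, y, hy, rfl⟩ := Finset.mem_mul.1 hz
          rw [mem_fib] at hx hy ⊢
          refine ⟨Finset.mul_mem_mul hx.1 hy.1, ?_⟩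
          rw [Nat.factorization_mul (by rintro rfl; exact hA0 hx.1) (by rintro rfl; exact hB0 hy.1)]
          simp [hx.2, hy.2]
        exact_mod_cast Finset.card_le_card this)
      ti tj
    rw [← Finset.sum_div, one_le_div (by positivity)] at this
    refine this.trans ?_
    have e : (A * B).card = ∑ s ∈ A.image (fun x => x.factorization p) + B.image (fun x => x.factorization p),
        (fib p (A * B) s).card := by
      apply Finset.card_eq_sum_card_fiberwise
      intro z hz
      obtain ⟨x, hx, y, hy, rfl⟩ := Finset.mem_mul.1 hz
      have : (x * y).factorization p = x.factorization p + y.factorization p := by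
        rw [Nat.factorization_mul (by rintro rfl; exact hA0 hx) (by rintro rfl; exact hB0 hy)]; simp
      simp only [this]
      exact Finset.add_mem_add (Finset.mem_image_of_mem _ hx) (Finset.mem_image_of_mem _ hy)
    rw [e]; push_cast; rfl

lemma doubling (M : ℕ) (hM : 2 ≤ M) (B : Finset ℕ) (hB : B.Nonempty) (hB0 : 0 ∉ B) :
    (B.card : ℝ) * ((B.card : ℝ) / G M B) ^ (1 / (200 * ((M:ℝ) + 1))) ≤ ((B * B).card : ℝ) := by
  have hsupp : ∀ x ∈ B, ∀ q ∉ B.biUnion (fun x => x.primeFactors), x.factorization q = 0 := by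
    intro x hx q hq
    rw [← Finsupp.notMem_support_iff, Nat.support_factorization]
    intro h
    exact hq (Finset.mem_biUnion.2 ⟨x, hx, h⟩)
  have := tree M hM _ rfl (B.biUnion (fun x => x.primeFactors)) (by
      intro p hp
      obtain ⟨x, _, hx⟩ := Finset.mem_biUnion.1 hp
      exact Nat.prime_of_mem_primeFactors hx) B B hB hB hB0 hB0
      (fun x hx y hy q hq => by rw [hsupp x hx q hq, hsupp y hy q hq])
      (fun x hx y hy q hq => by rw [hsupp x hx q hq, hsupp y hy q hq])
  refine le_trans (le_of_eq ?_) this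
  have h1 : (0:ℝ) < B.card := by exact_mod_cast Finset.card_pos.2 hB
  have h2 : (0:ℝ) < G M B := by exact_mod_cast G_pos M hB
  unfold F
  set c : ℝ := 1 / (400 * ((M:ℝ) + 1)) with hc
  have ec : (1 / (200 * ((M:ℝ) + 1))) = c + c := by rw [hc]; field_simp; norm_num
  rw [ec, Real.div_rpow h1.le h2.le, Real.rpow_add h2, Real.rpow_add h1, Real.rpow_add h1,
    Real.rpow_neg h2.le]
  have e : (B.card : ℝ) = (B.card : ℝ) ^ (1 / 2 : ℝ) * (B.card : ℝ) ^ (1 / 2 : ℝ) := by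
    rw [← Real.rpow_add h1]; norm_num
  have h3 := Real.rpow_pos_of_pos h2 c
  have gen : ∀ b r x y : ℝ, 0 < y → b = r * r → b * (x * x / (y * y)) = r * x * y⁻¹ * (r * x * y⁻¹) := by
    intro b r x y hy hb
    rw [hb]; field_simp
  exact gen _ _ _ _ h3 e


section Chang

variable {N : ℕ} [NeZero N]

noncomputable def S (A : Finset ℕ) (ψ : AddChar (ZMod N) ℂ) : ℂ := ∑ a ∈ A, ψ (a : ZMod N)

variable {ι : Type} [Fintype ι] [DecidableEq ι]

def Zs (ε : ι → ℤ) (B : ι → Finset ℕ) : Finset (ι → ℕ) :=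
  (Fintype.piFinset B).filter (fun x => ∑ i, ε i * (x i : ℤ) = 0)

lemma char_prod {κ : Type*} (s : Finset κ) (ψ : AddChar (ZMod N) ℂ) (f : κ → ZMod N) :
    ∏ i ∈ s, ψ (f i) = ψ (∑ i ∈ s, f i) := by
  classical
  induction s using Finset.induction_on with
  | empty => simp
  | insert a s ha ih => rw [Finset.prod_insert ha, Finset.sum_insert ha, AddChar.map_add_eq_mul, ih]

lemma count (ε : ι → ℤ) (B : ι → Finset ℕ) :
    ∑ ψ : AddChar (ZMod N) ℂ, ∏ i, ∑ a ∈ B i, ψ ((ε i * (a : ℤ) : ℤ) : ZMod N) =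
      (N : ℂ) * (((Fintype.piFinset B).filter
        (fun x => ((∑ i, ε i * (x i : ℤ) : ℤ) : ZMod N) = 0)).card : ℂ) := by
  simp_rw [Finset.prod_univ_sum]
  rw [Finset.sum_comm]
  have : ∀ x : ι → ℕ, ∑ ψ : AddChar (ZMod N) ℂ, ∏ i, ψ ((ε i * (x i : ℤ) : ℤ) : ZMod N) =
      if ((∑ i, ε i * (x i : ℤ) : ℤ) : ZMod N) = 0 then (N : ℂ) else 0 := by
    intro x
    have h := AddChar.sum_apply_eq_ite (α := ZMod N) (((∑ i, ε i * (x i : ℤ) : ℤ) : ZMod N))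
    rw [ZMod.card] at h
    rw [← h]
    apply Finset.sum_congr rfl
    intro ψ _
    rw [char_prod]
    congr 1
    push_cast
    rfl
  simp_rw [this]
  rw [← Finset.sum_filter, Finset.sum_const, nsmul_eq_mul, mul_comm]

lemma norm_eps (A : Finset ℕ) (ψ : AddChar (ZMod N) ℂ) (e : ℤ) (he : e = 1 ∨ e = -1) :
    ‖∑ a ∈ A, ψ ((e * (a : ℤ) : ℤ) : ZMod N)‖ = ‖S A ψ‖ := by
  rcases he with rfl | rfl
  · simp [S]
  · have : ∑ a ∈ A, ψ ((-1 * (a : ℤ) : ℤ) : ZMod N) = (starRingEnd ℂ) (S A ψ) := by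
      rw [S, map_sum]
      apply Finset.sum_congr rfl
      intro a _
      push_cast
      rw [neg_one_mul, AddChar.map_neg_eq_conj]
    rw [this, RCLike.norm_conj]

lemma count_le (ε : ι → ℤ) (hε : ∀ i, ε i = 1 ∨ ε i = -1) (B : ι → Finset ℕ) :
    (N : ℝ) * ((Zs ε B).card : ℝ) ≤ ∑ ψ : AddChar (ZMod N) ℂ, ∏ i, ‖S (B i) ψ‖ := by
  have h := congrArg norm (count (N := N) ε B)
  have h1 : (N : ℝ) * ((Zs ε B).card : ℝ) ≤ ‖(N : ℂ) * (((Fintype.piFinset B).filter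
        (fun x => ((∑ i, ε i * (x i : ℤ) : ℤ) : ZMod N) = 0)).card : ℂ)‖ := by
    rw [norm_mul, Complex.norm_natCast, Complex.norm_natCast]
    apply mul_le_mul_of_nonneg_left _ (Nat.cast_nonneg _)
    have : Zs ε B ⊆ ((Fintype.piFinset B).filter
        (fun x => ((∑ i, ε i * (x i : ℤ) : ℤ) : ZMod N) = 0)) := by
      intro x hx
      rw [Zs, Finset.mem_filter] at hx
      rw [Finset.mem_filter]
      refine ⟨hx.1, ?_⟩
      rw [hx.2]; simp
    exact_mod_cast Finset.card_le_card this
  rw [← h] at h1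
  refine h1.trans ((norm_sum_le _ _).trans (le_of_eq ?_))
  apply Finset.sum_congr rfl
  intro ψ _
  rw [norm_prod]
  exact Finset.prod_congr rfl fun i _ => norm_eps _ _ _ (hε i)

def eps (k : ℕ) : Fin k ⊕ Fin k → ℤ := Sum.elim (fun _ => 1) (fun _ => -1)

lemma eps_pm (k : ℕ) (i : Fin k ⊕ Fin k) : eps k i = 1 ∨ eps k i = -1 := by
  rcases i with i | i <;> simp [eps]

lemma count_ge (k L : ℕ) (hN : N = 2 * k * L + 1) (A : Finset ℕ) (hA : ∀ a ∈ A, a < L) :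
    ∑ ψ : AddChar (ZMod N) ℂ, ‖S A ψ‖ ^ (2 * k) ≤ (N : ℝ) * ((Zs (eps k) (fun _ => A)).card : ℝ) := by
  have h := count (N := N) (eps k) (fun _ => A)
  have e1 : ∑ ψ : AddChar (ZMod N) ℂ, ∏ i, ∑ a ∈ A, ψ ((eps k i * (a : ℤ) : ℤ) : ZMod N) =
      ((∑ ψ : AddChar (ZMod N) ℂ, ‖S A ψ‖ ^ (2 * k) : ℝ) : ℂ) := by
    rw [Complex.ofReal_sum]
    apply Finset.sum_congr rfl
    intro ψ _
    rw [Fintype.prod_sum_type]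
    have a1 : ∑ a ∈ A, ψ ((-1 * (a : ℤ) : ℤ) : ZMod N) = (starRingEnd ℂ) (S A ψ) := by
      rw [S, map_sum]
      apply Finset.sum_congr rfl
      intro a _
      push_cast
      rw [neg_one_mul, AddChar.map_neg_eq_conj]
    have a2 : ∑ a ∈ A, ψ ((1 * (a : ℤ) : ℤ) : ZMod N) = S A ψ := by simp [S]
    simp only [eps, Sum.elim_inl, Sum.elim_inr, a1, a2]
    simp only [Finset.prod_const, Finset.card_univ, Fintype.card_fin]
    rw [← mul_pow, Complex.mul_conj, Complex.normSq_eq_norm_sq, pow_mul]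
    push_cast; rfl
  rw [e1] at h
  have h' : ∑ ψ : AddChar (ZMod N) ℂ, ‖S A ψ‖ ^ (2 * k) = (N : ℝ) * (((Fintype.piFinset (fun _ : Fin k ⊕ Fin k => A)).filter
        (fun x => ((∑ i, eps k i * (x i : ℤ) : ℤ) : ZMod N) = 0)).card : ℝ) := by exact_mod_cast h
  rw [h']
  apply mul_le_mul_of_nonneg_left _ (Nat.cast_nonneg _)
  have : ((Fintype.piFinset (fun _ : Fin k ⊕ Fin k => A)).filter
        (fun x => ((∑ i, eps k i * (x i : ℤ) : ℤ) : ZMod N) = 0)) ⊆ Zs (eps k) (fun _ => A) := by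
    intro x hx
    rw [Finset.mem_filter] at hx
    rw [Zs, Finset.mem_filter]
    refine ⟨hx.1, ?_⟩
    have hd := (ZMod.intCast_zmod_eq_zero_iff_dvd _ N).1 hx.2
    apply Int.eq_zero_of_abs_lt_dvd hd
    have hx1 := Fintype.mem_piFinset.1 hx.1
    calc |∑ i, eps k i * (x i : ℤ)| ≤ ∑ i, |eps k i * (x i : ℤ)| := Finset.abs_sum_le_sum_abs _ _
      _ ≤ ∑ i : Fin k ⊕ Fin k, (L : ℤ) := by
        apply Finset.sum_le_sum
        intro i _
        have := hA _ (hx1 i)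
        rcases eps_pm k i with h | h <;> rw [h] <;> simp <;> omega
      _ < N := by
        simp [hN]
        have : ((k : ℤ) + k) * L = 2 * k * L := by ring
        linarith
  exact_mod_cast Finset.card_le_card this

lemma ultra (p : ℕ) (hp : p.Prime) [Nonempty ι] (ε : ι → ℤ) (hε : ∀ i, ε i = 1 ∨ ε i = -1) (x : ι → ℕ)
    (hx : ∀ i, x i ≠ 0) (h : ∑ i, ε i * (x i : ℤ) = 0) :
    ∃ s t, s ≠ t ∧ (x s).factorization p = (x t).factorization p := by
  obtain ⟨s, _, hs⟩ := Finset.exists_min_image (Finset.univ : Finset ι) (fun i => (x i).factorization p)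
    Finset.univ_nonempty
  by_contra hcon
  push Not at hcon
  have hd : ∀ t ∈ Finset.univ.erase s, ((p ^ ((x s).factorization p + 1) : ℕ) : ℤ) ∣ ε t * (x t : ℤ) := by
    intro t ht
    apply Dvd.dvd.mul_left
    rw [Int.natCast_dvd_natCast]
    rw [hp.pow_dvd_iff_le_factorization (hx t)]
    have h1 := hs t (Finset.mem_univ _)
    have h2 := hcon s t (Finset.ne_of_mem_erase ht).symm
    omega
  have h1 := Finset.dvd_sum hd
  rw [← Finset.add_sum_erase _ _ (Finset.mem_univ s)] at h
  have h2 : ((p ^ ((x s).factorization p + 1) : ℕ) : ℤ) ∣ ε s * (x s : ℤ) := by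
    have : ε s * (x s : ℤ) = - ∑ t ∈ Finset.univ.erase s, ε t * (x t : ℤ) := by linarith
    rw [this]; exact (dvd_neg).2 h1
  have h3 : ((p ^ ((x s).factorization p + 1) : ℕ) : ℤ) ∣ (x s : ℤ) := by
    rcases hε s with e | e <;> rw [e] at h2 <;> simpa using h2
  rw [Int.natCast_dvd_natCast, hp.pow_dvd_iff_le_factorization (hx s)] at h3
  omega

lemma holder {κ : Type*} (s : Finset κ) (k : ℕ) (hk : 2 ≤ k) (f g : κ → ℝ) (hf : ∀ i, 0 ≤ f i)
    (hg : ∀ i, 0 ≤ g i) : ∑ i ∈ s, f i * g i ^ (k - 1) ≤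
      (∑ i ∈ s, f i ^ k) ^ (1 / (k : ℝ)) * (∑ i ∈ s, g i ^ k) ^ (1 - 1 / (k : ℝ)) := by
  have hk1 : (1 : ℝ) < k := by exact_mod_cast (by omega : 1 < k)
  have hc : Real.HolderConjugate (k : ℝ) ((k : ℝ) / (k - 1)) := Real.HolderConjugate.conjExponent hk1
  have := Real.inner_le_Lp_mul_Lq_of_nonneg s hc (f := f) (g := fun i => g i ^ (k - 1))
    (fun i _ => hf i) (fun i _ => pow_nonneg (hg i) _)
  refine this.trans (le_of_eq ?_)
  have e1 : ∀ i, f i ^ (k : ℝ) = f i ^ k := fun i => Real.rpow_natCast _ _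
  have e2 : ∀ i, (g i ^ (k - 1)) ^ ((k : ℝ) / (k - 1)) = g i ^ k := by
    intro i
    rw [← Real.rpow_natCast, ← Real.rpow_mul (hg i), ← Real.rpow_natCast]
    congr 1
    rw [Nat.cast_sub (by omega)]
    have : (k : ℝ) - 1 ≠ 0 := by linarith
    push_cast
    field_simp
  simp_rw [e1, e2]
  congr 2
  have : (k : ℝ) - 1 ≠ 0 := by linarith
  field_simp

lemma chang_step (k L : ℕ) (hk : 2 ≤ k) (hN : N = 2 * k * L + 1) (A : Finset ℕ)
    (hA : ∀ a ∈ A, a < L) (hA0 : 0 ∉ A) (p : ℕ) (hp : p.Prime) :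
    ∑ ψ : AddChar (ZMod N) ℂ, ‖S A ψ‖ ^ (2 * k) ≤
      (2 * k : ℝ) ^ 2 * ∑ j ∈ A.image (fun x => x.factorization p),
        ∑ ψ : AddChar (ZMod N) ℂ, ‖S (fib p A j) ψ‖ ^ 2 * (‖S A ψ‖ ^ 2) ^ (k - 1) := by
  classical
  set I := A.image (fun x => x.factorization p) with hI
  let ι := Fin k ⊕ Fin k
  have : Nonempty ι := ⟨Sum.inl ⟨0, by omega⟩⟩
  let B : (ι × ι) → ℕ → ι → Finset ℕ := fun st j i => if i = st.1 ∨ i = st.2 then fib p A j else A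
  refine (count_ge k L hN A hA).trans ?_
  have hsub : Zs (eps k) (fun _ => A) ⊆
      ((Finset.univ : Finset ι).offDiag ×ˢ I).biUnion (fun q => Zs (eps k) (B q.1 q.2)) := by
    intro x hx
    rw [Zs, Finset.mem_filter, Fintype.mem_piFinset] at hx
    obtain ⟨s, t, hst, he⟩ := ultra p hp (eps k) (eps_pm k) x
      (fun i h0 => hA0 (h0 ▸ hx.1 i)) hx.2
    rw [Finset.mem_biUnion]
    refine ⟨((s, t), (x s).factorization p), ?_, ?_⟩
    · rw [Finset.mem_product]
      exact ⟨by simpa using hst, Finset.mem_image_of_mem _ (hx.1 s)⟩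
    · rw [Zs, Finset.mem_filter, Fintype.mem_piFinset]
      refine ⟨fun i => ?_, hx.2⟩
      simp only [B]
      split_ifs with h
      · rw [mem_fib]
        refine ⟨hx.1 i, ?_⟩
        rcases h with rfl | rfl
        · rfl
        · exact he.symm
      · exact hx.1 i
  have hcard : ((Zs (eps k) (fun _ => A)).card : ℝ) ≤
      ∑ q ∈ (Finset.univ : Finset ι).offDiag ×ˢ I, ((Zs (eps k) (B q.1 q.2)).card : ℝ) := by
    exact_mod_cast (Finset.card_le_card hsub).trans Finset.card_biUnion_le
  refine (mul_le_mul_of_nonneg_left hcard (Nat.cast_nonneg _)).trans ?_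
  rw [Finset.mul_sum, Finset.sum_product]
  have hterm : ∀ st ∈ (Finset.univ : Finset ι).offDiag, ∀ j ∈ I,
      (N : ℝ) * ((Zs (eps k) (B st j)).card : ℝ) ≤
        ∑ ψ : AddChar (ZMod N) ℂ, ‖S (fib p A j) ψ‖ ^ 2 * (‖S A ψ‖ ^ 2) ^ (k - 1) := by
    intro st hst j hj
    refine (count_le (eps k) (eps_pm k) _).trans (le_of_eq ?_)
    apply Finset.sum_congr rfl
    intro ψ _
    have hne : st.1 ≠ st.2 := by simpa using hst
    rw [← Finset.mul_prod_erase _ _ (Finset.mem_univ st.1),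
      ← Finset.mul_prod_erase (Finset.univ.erase st.1) _ (Finset.mem_erase.2 ⟨hne.symm, Finset.mem_univ st.2⟩)]
    have : ∏ i ∈ (Finset.univ.erase st.1).erase st.2, ‖S (B st j i) ψ‖ =
        ∏ i ∈ (Finset.univ.erase st.1).erase st.2, ‖S A ψ‖ := by
      apply Finset.prod_congr rfl
      intro i hi
      simp only [Finset.mem_erase] at hi
      simp [B, hi.1, hi.2.1]
    rw [this, Finset.prod_const, Finset.card_erase_of_mem (Finset.mem_erase.2 ⟨hne.symm, Finset.mem_univ st.2⟩),
      Finset.card_erase_of_mem (Finset.mem_univ _), Finset.card_univ]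
    have hcd : Fintype.card ι = 2 * k := by simp [ι]; ring
    rw [hcd, ← pow_mul]
    have : 2 * k - 1 - 1 = 2 * (k - 1) := by omega
    rw [this]
    simp [B]
    ring
  calc _ ≤ ∑ st ∈ (Finset.univ : Finset ι).offDiag, ∑ j ∈ I,
        ∑ ψ : AddChar (ZMod N) ℂ, ‖S (fib p A j) ψ‖ ^ 2 * (‖S A ψ‖ ^ 2) ^ (k - 1) :=
        Finset.sum_le_sum fun st hst => Finset.sum_le_sum fun j hj => hterm st hst j hj
    _ ≤ _ := by
      rw [Finset.sum_const, nsmul_eq_mul]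
      apply mul_le_mul_of_nonneg_right
      · have : (Finset.univ : Finset ι).offDiag.card ≤ (2 * k) ^ 2 := by
          rw [Finset.offDiag_card]
          have hcd : (Finset.univ : Finset ι).card = 2 * k := by simp [ι]; ring
          rw [hcd, sq]; exact Nat.sub_le _ _
        exact_mod_cast this
      · apply Finset.sum_nonneg; intro j _; apply Finset.sum_nonneg; intro ψ _; positivity

lemma root_le {k : ℕ} (hk : 2 ≤ k) {X Y : ℝ} (hX : 0 ≤ X) (hY : 0 ≤ Y)
    (h : X ≤ Y * X ^ (1 - 1 / (k : ℝ))) : X ≤ Y ^ k := by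
  rcases hX.eq_or_lt with rfl | hX
  · positivity
  have hk0 : (k : ℝ) ≠ 0 := by positivity
  have h1 : X ^ (1 / (k : ℝ)) ≤ Y := by
    have e : X = X ^ (1 / (k : ℝ)) * X ^ (1 - 1 / (k : ℝ)) := by
      rw [← Real.rpow_add hX]; simp
    nth_rewrite 1 [e] at h
    exact le_of_mul_le_mul_right h (Real.rpow_pos_of_pos hX _)
  calc X = (X ^ (1 / (k : ℝ))) ^ k := by
        rw [← Real.rpow_natCast, ← Real.rpow_mul hX.le]; simp [hk0]
    _ ≤ Y ^ k := pow_le_pow_left₀ (Real.rpow_nonneg hX.le _) h1 k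

lemma chang (k L : ℕ) (hk : 2 ≤ k) (hN : N = 2 * k * L + 1) (n : ℕ) (A : Finset ℕ) (h : QC n A) :
    (∀ a ∈ A, a < L) → 0 ∉ A →
    ∑ ψ : AddChar (ZMod N) ℂ, ‖S A ψ‖ ^ (2 * k) ≤ N * (((2 * k : ℝ) ^ 2) ^ n * A.card) ^ k := by
  have hk0 : (k : ℝ) ≠ 0 := by positivity
  induction h with
  | single n A h =>
    intro _ _
    have hb : ∀ ψ : AddChar (ZMod N) ℂ, ‖S A ψ‖ ≤ A.card := by
      intro ψ
      unfold S
      refine (norm_sum_le _ _).trans ?_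
      simp
    have hC : (1:ℝ) ≤ ((2 * k : ℝ) ^ 2) ^ n := by
      apply one_le_pow₀
      apply one_le_pow₀
      have : (2:ℝ) ≤ k := by exact_mod_cast hk
      linarith
    have hA1 : (A.card : ℝ) ≤ 1 := by exact_mod_cast h
    calc ∑ ψ : AddChar (ZMod N) ℂ, ‖S A ψ‖ ^ (2 * k) ≤ ∑ ψ : AddChar (ZMod N) ℂ, (((2 * k : ℝ) ^ 2) ^ n * A.card) ^ k := by
          apply Finset.sum_le_sum
          intro ψ _
          rw [pow_mul]
          apply pow_le_pow_left₀ (by positivity)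
          have := hb ψ
          have h0 := norm_nonneg (S A ψ)
          calc ‖S A ψ‖ ^ 2 ≤ A.card := by nlinarith
            _ ≤ _ := le_mul_of_one_le_left (Nat.cast_nonneg _) hC
      _ = _ := by
        rw [Finset.sum_const, nsmul_eq_mul, Finset.card_univ]
        congr 2
        rw [AddChar.card_eq, ZMod.card]
  | step n p A hp h ih =>
    intro hA hA0
    set X := ∑ ψ : AddChar (ZMod N) ℂ, ‖S A ψ‖ ^ (2 * k) with hX
    have hX0 : 0 ≤ X := Finset.sum_nonneg fun _ _ => by positivity
    have hXe : X = ∑ ψ : AddChar (ZMod N) ℂ, (‖S A ψ‖ ^ 2) ^ k := by simp_rw [hX, pow_mul]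
    have h1 := chang_step k L hk hN A hA hA0 p hp
    rw [← hX] at h1
    set C : ℝ := (2 * k : ℝ) ^ 2 with hC
    have hC0 : 0 ≤ C := by positivity
    have h2 : ∀ j ∈ A.image (fun x => x.factorization p),
        ∑ ψ : AddChar (ZMod N) ℂ, ‖S (fib p A j) ψ‖ ^ 2 * (‖S A ψ‖ ^ 2) ^ (k - 1) ≤
        ((N : ℝ) ^ (1 / (k : ℝ)) * (C ^ n * X ^ (1 - 1 / (k : ℝ)))) * (fib p A j).card := by
      intro j _
      refine (holder Finset.univ k hk (fun ψ => ‖S (fib p A j) ψ‖ ^ 2) (fun ψ => ‖S A ψ‖ ^ 2)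
        (fun _ => by positivity) (fun _ => by positivity)).trans ?_
      rw [← hXe]
      have h3 := ih j (fun a ha => hA a (fib_subset _ _ _ ha)) (fun h => hA0 (fib_subset _ _ _ h))
      simp_rw [pow_mul] at h3
      have h4 := Real.rpow_le_rpow (Finset.sum_nonneg fun _ _ => by positivity) h3
        (by positivity : (0:ℝ) ≤ 1 / (k : ℝ))
      rw [Real.mul_rpow (by positivity) (by positivity), ← Real.rpow_natCast (C ^ n * _) k,
        ← Real.rpow_mul (by positivity), mul_one_div_cancel hk0, Real.rpow_one] at h4
      calc _ ≤ _ := mul_le_mul_of_nonneg_right h4 (Real.rpow_nonneg hX0 _)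
        _ = _ := by ring
    have h5 := h1.trans (mul_le_mul_of_nonneg_left (Finset.sum_le_sum h2) hC0)
    rw [← Finset.mul_sum] at h5
    have h6 : ∑ j ∈ A.image (fun x => x.factorization p), ((fib p A j).card : ℝ) = A.card := by
      rw [Finset.card_eq_sum_card_image (fun x : ℕ => x.factorization p) A]
      push_cast; rfl
    rw [h6] at h5
    have h7 := root_le hk (Y := (N : ℝ) ^ (1 / (k : ℝ)) * (C ^ (n + 1) * A.card)) hX0 (by positivity)
      (h5.trans (le_of_eq (by ring)))
    refine h7.trans (le_of_eq ?_)
    rw [mul_pow, ← Real.rpow_natCast ((N:ℝ) ^ _), ← Real.rpow_mul (by positivity), one_div_mul_cancel hk0, Real.rpow_one]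

end Chang

lemma sum_mem_nsmul (k : ℕ) (A : Finset ℕ) (x : Fin k → ℕ) (hx : ∀ i, x i ∈ A) : ∑ i, x i ∈ k • A := by
  induction k with
  | zero => simp
  | succ k ih =>
    rw [Fin.sum_univ_castSucc, succ_nsmul]
    exact Finset.add_mem_add (ih _ fun i => hx _) (hx _)

lemma energy_lower (k : ℕ) (A : Finset ℕ) :
    A.card ^ (2 * k) ≤ (k • A).card * (Zs (eps k) (fun _ => A)).card := by
  classical
  set R := Fintype.piFinset (fun _ : Fin k => A) with hR
  have hRc : R.card = A.card ^ k := by simp [hR]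
  let r : ℕ → Finset (Fin k → ℕ) := fun n => R.filter (fun x => ∑ i, x i = n)
  have h1 : R.card = ∑ n ∈ k • A, (r n).card := by
    apply Finset.card_eq_sum_card_fiberwise
    intro x hx
    exact sum_mem_nsmul k A x (Fintype.mem_piFinset.1 hx)
  have h2 : R.card ^ 2 ≤ (k • A).card * ∑ n ∈ k • A, (r n).card ^ 2 := by
    rw [h1]; exact sq_sum_le_card_mul_sum_sq
  have h3 : ∑ n ∈ k • A, (r n).card ^ 2 ≤ (Zs (eps k) (fun _ => A)).card := by
    have : ∑ n ∈ k • A, (r n).card ^ 2 = ((k • A).sigma (fun n => r n ×ˢ r n)).card := by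
      rw [Finset.card_sigma]
      apply Finset.sum_congr rfl
      intro n _
      rw [Finset.card_product, sq]
    rw [this]
    apply Finset.card_le_card_of_injOn (fun q => Sum.elim q.2.1 q.2.2)
    · rintro ⟨n, x, y⟩ hq
      simp only [Finset.coe_sigma, Set.mem_sigma_iff, Finset.mem_coe, Finset.mem_product, r,
        Finset.mem_filter, hR, Fintype.mem_piFinset] at hq
      obtain ⟨_, ⟨hx, hxs⟩, ⟨hy, hys⟩⟩ := hq
      simp only [Zs, Finset.coe_filter, Set.mem_ofPred_eq, Fintype.mem_piFinset]
      constructor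
      · rintro (i | i)
        · exact hx i
        · exact hy i
      · rw [Fintype.sum_sum_type]
        simp only [eps, Sum.elim_inl, Sum.elim_inr, one_mul, neg_one_mul, Finset.sum_neg_distrib]
        have : (∑ i, (x i : ℤ)) = ∑ i, (y i : ℤ) := by
          exact_mod_cast hxs.trans hys.symm
        rw [this]; ring
    · rintro ⟨n, x, y⟩ hq ⟨n', x', y'⟩ hq' he
      simp only [Finset.coe_sigma, Set.mem_sigma_iff, Finset.mem_coe, Finset.mem_product, r,
        Finset.mem_filter] at hq hq'
      have ex : x = x' := by
        funext i; exact congrFun he (Sum.inl i)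
      have ey : y = y' := by
        funext i; exact congrFun he (Sum.inr i)
      subst ex ey
      have : n = n' := hq.2.1.2.symm.trans hq'.2.1.2
      subst this
      rfl
  calc A.card ^ (2 * k) = R.card ^ 2 := by rw [hRc, ← pow_mul]; ring
    _ ≤ _ := h2.trans (Nat.mul_le_mul_left _ h3)

lemma chang_final (k : ℕ) (hk : 2 ≤ k) (n : ℕ) (A : Finset ℕ) (hA : A.Nonempty) (hA0 : 0 ∉ A) (h : QC n A) :
    A.card ^ k ≤ (k • A).card * (((2 * k) ^ 2) ^ n) ^ k := by
  set L := A.sup id + 1 with hL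
  have hAL : ∀ a ∈ A, a < L := fun a ha => Nat.lt_succ_of_le (Finset.le_sup (f := id) ha)
  set N := 2 * k * L + 1 with hN
  have : NeZero N := ⟨by omega⟩
  have h1 := chang (N := N) k L hk hN n A h hAL hA0
  have h2 := count_le (N := N) (eps k) (eps_pm k) (fun _ => A)
  have e : ∀ ψ : AddChar (ZMod N) ℂ, ∏ _i : Fin k ⊕ Fin k, ‖S A ψ‖ = ‖S A ψ‖ ^ (2 * k) := by
    intro ψ; simp; ring
  simp_rw [e] at h2
  have h3 := h2.trans h1
  have hN0 : (0:ℝ) < N := by positivity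
  have h4 : ((Zs (eps k) (fun _ => A)).card : ℝ) ≤ (((2 * k : ℝ) ^ 2) ^ n * A.card) ^ k :=
    le_of_mul_le_mul_left h3 hN0
  have h5 : (Zs (eps k) (fun _ => A)).card ≤ (((2 * k) ^ 2) ^ n * A.card) ^ k := by exact_mod_cast h4
  have h6 := (energy_lower k A).trans (Nat.mul_le_mul_left _ h5)
  have h7 : 0 < A.card ^ k := pow_pos (Finset.card_pos.2 hA) _
  apply Nat.le_of_mul_le_mul_right _ h7
  calc A.card ^ k * A.card ^ k = A.card ^ (2 * k) := by ring
    _ ≤ _ := h6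
    _ = _ := by rw [mul_pow]; ring


lemma zero_notMem_pow (A : Finset ℕ) (hA : 0 ∉ A) (k : ℕ) : 0 ∉ A ^ k := by
  induction k with
  | zero => simp
  | succ k ih =>
    rw [pow_succ]
    intro h
    obtain ⟨x, hx, y, hy, hxy⟩ := Finset.mem_mul.1 h
    rcases Nat.mul_eq_zero.1 hxy with rfl | rfl
    · exact ih hx
    · exact hA hy

lemma card_pow_mono (A : Finset ℕ) (hA : 0 ∉ A) (hne : A.Nonempty) : Monotone fun k => (A ^ k).card := by
  apply monotone_nat_of_le_succ
  intro k
  obtain ⟨a, ha⟩ := hne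
  rw [pow_succ]
  have ha0 : a ≠ 0 := by rintro rfl; exact hA ha
  exact Finset.card_le_card_mul_right_of_injective ha (mul_left_injective₀ ha0)

/-- transfer of the structured piece from `B` to `A` -/
lemma transfer (A B : Finset ℕ) (hA0 : 0 ∉ A) (hB0 : 0 ∉ B) (hA : A.Nonempty) (hB : B.Nonempty) (r : ℕ)
    (hq : QC r B) : ∃ A' ⊆ A, QC r A' ∧ A.card * B.card ≤ (A * B).card * A'.card := by
  classical
  let fb : ℕ → Finset (ℕ × ℕ) := fun z => (A ×ˢ B).filter (fun q => q.1 * q.2 = z)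
  obtain ⟨z, hz, hmax⟩ := Finset.exists_max_image (A * B) (fun z => (fb z).card) (hA.mul hB)
  have h1 : (A ×ˢ B).card = ∑ z ∈ A * B, (fb z).card := by
    apply Finset.card_eq_sum_card_fiberwise
    intro q hq
    have := Finset.mem_product.1 hq
    exact Finset.mul_mem_mul this.1 this.2
  have hz0 : z ≠ 0 := by
    rintro rfl
    obtain ⟨x, hx, y, hy, hxy⟩ := Finset.mem_mul.1 hz
    rcases Nat.mul_eq_zero.1 hxy with rfl | rfl
    · exact hA0 hx
    · exact hB0 hy
  have hdiv : ∀ q ∈ fb z, q.1 ∈ A ∧ q.2 ∈ B ∧ q.1 * q.2 = z ∧ z / q.1 = q.2 := by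
    intro q hq
    rw [Finset.mem_filter, Finset.mem_product] at hq
    refine ⟨hq.1.1, hq.1.2, hq.2, ?_⟩
    rw [← hq.2]
    apply Nat.mul_div_cancel_left
    apply Nat.pos_of_ne_zero
    intro h0; rw [h0] at hq; exact hA0 hq.1.1
  refine ⟨(fb z).image Prod.fst, ?_, ?_, ?_⟩
  · intro a ha
    obtain ⟨q, hq, rfl⟩ := Finset.mem_image.1 ha
    exact (hdiv q hq).1
  · apply hq.refl hz0 (fun a => z / a)
    intro a ha
    obtain ⟨q, hq, rfl⟩ := Finset.mem_image.1 ha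
    obtain ⟨_, h2, h3, h4⟩ := hdiv q hq
    rw [h4]; exact ⟨h2, h3⟩
  · have hinj : Set.InjOn Prod.fst (fb z : Set (ℕ × ℕ)) := by
      intro q hq q' hq' he
      have e1 := (hdiv q hq).2.2.2
      have e2 := (hdiv q' hq').2.2.2
      apply Prod.ext he
      rw [← e1, ← e2, he]
    rw [Finset.card_image_of_injOn hinj, ← Finset.card_product, h1]
    exact Finset.sum_le_card_nsmul _ _ _ hmax

lemma exists_doubling (A : Finset ℕ) (hcard : 2 ≤ A.card) (b l : ℕ) (K : ℝ) (hK : 1 ≤ K)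
    (hKl : K ^ l = (A.card : ℝ) ^ b) (h : (A ^ (2 ^ l)).card ≤ A.card ^ b) :
    ∃ i < l, ((A ^ (2 ^ (i + 1))).card : ℝ) ≤ K * (A ^ (2 ^ i)).card := by
  by_contra hcon
  push Not at hcon
  have hi : ∀ i ≤ l, K ^ i * (A.card : ℝ) ≤ (A ^ (2 ^ i)).card := by
    intro i
    induction i with
    | zero => intro _; simp
    | succ i ih =>
      intro hil
      have h1 := ih (by omega)
      have h2 := hcon i (by omega)
      calc K ^ (i + 1) * (A.card : ℝ) = K * (K ^ i * A.card) := by ring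
        _ ≤ K * (A ^ (2 ^ i)).card := by gcongr
        _ ≤ _ := h2.le
  have h1 := hi l le_rfl
  rw [hKl] at h1
  have h2 : A.card ^ b * A.card ≤ A.card ^ b := by
    have : A.card ^ b * A.card ≤ (A ^ (2 ^ l)).card := by exact_mod_cast h1
    exact this.trans h
  have h3 : 0 < A.card ^ b := pow_pos (by omega) _
  nlinarith

lemma core (b : ℕ) (hb : 0 < b) : ∃ m l : ℕ, ∀ A : Finset ℕ, 0 ∉ A → 2 ≤ A.card →
    A.card ^ b < (m • A).card ∨ A.card ^ b < (A ^ (2 ^ l)).card := by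
  set m := 2 * b + 1 with hm
  set C := (2 * m) ^ 2 with hC
  set M := C ^ (4 * b) with hM
  set E := 200 * (M + 1) with hE
  set D := E + 1 with hD
  refine ⟨m, 4 * b * D, ?_⟩
  intro A hA0 hcard
  by_contra hcon
  push Not at hcon
  obtain ⟨hsum, hprod⟩ := hcon
  set l := 4 * b * D with hl
  have hA : A.Nonempty := Finset.card_pos.1 (by omega)
  have hC2 : 2 ≤ C := by
    have : 2 ≤ 2 * m := by omega
    rw [hC]; nlinarith
  have hM2 : 2 ≤ M := by
    calc 2 ≤ C := hC2
      _ = C ^ 1 := (pow_one _).symm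
      _ ≤ C ^ (4 * b) := Nat.pow_le_pow_right (by omega) (by omega)
  set n := A.card with hn
  have hn1 : (1 : ℝ) ≤ n := by exact_mod_cast (by omega : 1 ≤ n)
  have hDpos : (0 : ℝ) < D := by positivity
  set K : ℝ := (n : ℝ) ^ (1 / (4 * (D : ℝ))) with hK
  have hK1 : 1 ≤ K := Real.one_le_rpow hn1 (by positivity)
  have hKD : (K ^ D) ^ 4 = n := by
    rw [← pow_mul, hK, ← Real.rpow_natCast, ← Real.rpow_mul (by positivity)]
    have : 1 / (4 * (D : ℝ)) * ((D * 4 : ℕ) : ℝ) = 1 := by push_cast; field_simp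
    rw [this, Real.rpow_one]
  have hKl : K ^ l = (n : ℝ) ^ b := by
    have : l = D * 4 * b := by rw [hl]; ring
    rw [this, pow_mul, pow_mul, hKD]
  obtain ⟨i, hil, hi⟩ := exists_doubling A hcard b l K hK1 hKl hprod
  set B := A ^ (2 ^ i) with hB
  have hmono := card_pow_mono A hA0 hA
  have hB0 : 0 ∉ B := zero_notMem_pow A hA0 _
  have hBne : B.Nonempty := hA.pow
  have hBB : B * B = A ^ (2 ^ (i + 1)) := by
    rw [hB, ← pow_add]; congr 1; ring
  have hBcard : B.card ≤ n ^ b :=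
    le_trans (hmono (Nat.pow_le_pow_right (by norm_num) hil.le)) hprod
  have hBpos : (0:ℝ) < B.card := by exact_mod_cast Finset.card_pos.2 hBne
  have hGpos : (0:ℝ) < G M B := by exact_mod_cast G_pos M hBne
  have hd := doubling M hM2 B hBne hB0
  rw [hBB] at hd
  have hd2 : ((B.card : ℝ) / G M B) ^ (1 / (200 * ((M:ℝ) + 1))) ≤ K := by
    have := hd.trans hi
    rw [mul_comm K] at this
    exact le_of_mul_le_mul_left this hBpos
  have hQ : (B.card : ℝ) / G M B ≤ K ^ E := by
    have e : (B.card : ℝ) / G M B = (((B.card : ℝ) / G M B) ^ (1 / (200 * ((M:ℝ) + 1)))) ^ E := by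
      rw [← Real.rpow_natCast, ← Real.rpow_mul (by positivity)]
      have : 1 / (200 * ((M:ℝ) + 1)) * (E : ℝ) = 1 := by rw [hE]; push_cast; field_simp
      rw [this, Real.rpow_one]
    rw [e]
    exact pow_le_pow_left₀ (by positivity) hd2 E
  rw [div_le_iff₀ hGpos] at hQ
  obtain ⟨B', hB'B, hB'q, hB'c⟩ := exists_G M B
  have hB'ne : B'.Nonempty := by
    rw [← Finset.card_pos, hB'c]; exact G_pos M hBne
  obtain ⟨A', hA'A, hA'q, hA'c⟩ := transfer A B' hA0 (fun h => hB0 (hB'B h)) hA hB'ne _ hB'q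
  have hAB' : ((A * B').card : ℝ) ≤ K * B.card := by
    refine le_trans ?_ hi
    have : (A * B').card ≤ (A ^ (2 ^ (i + 1))).card := by
      calc (A * B').card ≤ (A * B).card := Finset.card_le_card (Finset.mul_subset_mul_left hB'B)
        _ = (A ^ (2 ^ i + 1)).card := by rw [hB, pow_succ']
        _ ≤ _ := hmono (by rw [pow_succ]; have := Nat.one_le_two_pow (n := i); omega)
    exact_mod_cast this
  -- n ≤ K^D * |A'|
  have hsize : (n : ℝ) ≤ K ^ D * A'.card := by
    rw [hB'c] at hA'c
    have h1 : (n : ℝ) * G M B ≤ (A * B').card * A'.card := by exact_mod_cast hA'c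
    have h2 : (n : ℝ) * G M B ≤ (K ^ D * A'.card) * G M B := by
      calc (n : ℝ) * G M B ≤ (A * B').card * A'.card := h1
        _ ≤ (K * (K ^ E * G M B)) * A'.card := by
          apply mul_le_mul_of_nonneg_right _ (Nat.cast_nonneg _)
          exact hAB'.trans (mul_le_mul_of_nonneg_left hQ (by linarith))
        _ = _ := by rw [hD]; ring
    exact le_of_mul_le_mul_right h2 hGpos
  have hsize4 : n ^ 3 ≤ A'.card ^ 4 := by
    have h1 : (n : ℝ) ^ 4 ≤ n * (A'.card : ℝ) ^ 4 := by
      have := pow_le_pow_left₀ (by positivity) hsize 4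
      rwa [mul_pow, hKD] at this
    have h2 : n ^ 4 ≤ n * A'.card ^ 4 := by exact_mod_cast h1
    have h3 : n * n ^ 3 ≤ n * A'.card ^ 4 := by
      calc n * n ^ 3 = n ^ 4 := by ring
        _ ≤ _ := h2
    exact Nat.le_of_mul_le_mul_left h3 (by omega)
  have hA'ne : A'.Nonempty := by
    rw [← Finset.card_pos]
    by_contra h0
    have : A'.card = 0 := by omega
    rw [this] at hsize4
    have : 0 < n ^ 3 := pow_pos (by omega) _
    simp at hsize4
    omega
  set r := Nat.log M B.card with hr
  have hCr : (C ^ r) ^ 4 ≤ n := by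
    have h1 : M ^ r ≤ n ^ b := (Nat.pow_log_le_self M (Finset.card_pos.2 hBne).ne').trans hBcard
    have h2 : ((C ^ r) ^ 4) ^ b ≤ n ^ b := by
      calc ((C ^ r) ^ 4) ^ b = M ^ r := by rw [hM]; ring
        _ ≤ _ := h1
    exact (Nat.pow_le_pow_iff_left (by omega)).1 h2
  have hch := chang_final m (by omega) r A' hA'ne (fun h => hA0 (hA'A h)) hA'q
  rw [← hC] at hch
  have hfin : (m • A').card ≤ n ^ b :=
    (Finset.card_le_card (Finset.nsmul_subset_nsmul_left hA'A)).trans hsum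
  have h1 : (n ^ (4 * b + 2)) * n ^ m ≤ n ^ (4 * b) * n ^ m := by
    calc (n ^ (4 * b + 2)) * n ^ m = (n ^ 3) ^ m := by rw [hm]; ring
      _ ≤ (A'.card ^ 4) ^ m := Nat.pow_le_pow_left hsize4 _
      _ = (A'.card ^ m) ^ 4 := by ring
      _ ≤ ((m • A').card * (C ^ r) ^ m) ^ 4 := Nat.pow_le_pow_left hch _
      _ = (m • A').card ^ 4 * ((C ^ r) ^ 4) ^ m := by ring
      _ ≤ (n ^ b) ^ 4 * n ^ m := Nat.mul_le_mul (Nat.pow_le_pow_left hfin _) (Nat.pow_le_pow_left hCr _)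
      _ = _ := by ring
  have h2 := Nat.le_of_mul_le_mul_right h1 (pow_pos (by omega) _)
  have h3 := (Nat.pow_le_pow_iff_right (by omega : 1 < n)).1 h2
  omega

lemma card_nsmul_ge (A : Finset ℤ) (hA : 2 ≤ A.card) (k : ℕ) : k + 1 ≤ (k • A).card := by
  have hne : A.Nonempty := Finset.card_pos.1 (by omega)
  induction k with
  | zero => simp
  | succ k ih =>
    rw [succ_nsmul]
    have := cauchy_davenport_add_of_linearOrder_isCancelAdd (s := k • A) (t := A)
      (Finset.card_pos.1 (by omega)) hne
    omega

lemma exists_half (A : Finset ℤ) : ∃ (A' : Finset ℕ) (e : ℤ), e ≠ 0 ∧ 0 ∉ A' ∧ (∀ a ∈ A', e * (a : ℤ) ∈ A) ∧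
    A.card ≤ 2 * A'.card + 1 := by
  classical
  have key : ∀ e : ℤ, (e = 1 ∨ e = -1) →
      ((A.filter (fun x => 0 < e * x)).image Int.natAbs).card = (A.filter (fun x => 0 < e * x)).card ∧
      0 ∉ ((A.filter (fun x => 0 < e * x)).image Int.natAbs) ∧
      ∀ a ∈ ((A.filter (fun x => 0 < e * x)).image Int.natAbs), e * (a : ℤ) ∈ A := by
    intro e he
    refine ⟨?_, ?_, ?_⟩
    · apply Finset.card_image_of_injOn
      intro x hx y hy hxy
      have h1 := (Finset.mem_filter.1 hx).2
      have h2 := (Finset.mem_filter.1 hy).2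
      rcases he with rfl | rfl <;> omega
    · intro h
      obtain ⟨x, hx, hx0⟩ := Finset.mem_image.1 h
      have h1 := (Finset.mem_filter.1 hx).2
      rcases he with rfl | rfl <;> omega
    · intro a ha
      obtain ⟨x, hx, rfl⟩ := Finset.mem_image.1 ha
      obtain ⟨h0, h1⟩ := Finset.mem_filter.1 hx
      have : e * ((x.natAbs : ℕ) : ℤ) = x := by rcases he with rfl | rfl <;> omega
      rw [this]; exact h0
  have hc : A.card ≤ (A.filter (fun x => 0 < 1 * x)).card + (A.filter (fun x => 0 < -1 * x)).card + 1 := by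
    have : A ⊆ (A.filter (fun x => 0 < 1 * x)) ∪ (A.filter (fun x => 0 < -1 * x)) ∪ {0} := by
      intro x hx
      simp only [Finset.mem_union, Finset.mem_filter, Finset.mem_singleton, hx, true_and]
      omega
    refine (Finset.card_le_card this).trans ((Finset.card_union_le _ _).trans ?_)
    have := Finset.card_union_le (A.filter (fun x => 0 < 1 * x)) (A.filter (fun x => 0 < -1 * x))
    simp only [Finset.card_singleton]
    omega
  obtain ⟨a1, a2, a3⟩ := key 1 (Or.inl rfl)
  obtain ⟨b1, b2, b3⟩ := key (-1) (Or.inr rfl)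
  rcases le_total (A.filter (fun x => 0 < 1 * x)).card (A.filter (fun x => 0 < -1 * x)).card with h | h
  · exact ⟨_, -1, by norm_num, b2, b3, by omega⟩
  · exact ⟨_, 1, by norm_num, a2, a3, by omega⟩

lemma nsmul_transfer (A : Finset ℤ) (A' : Finset ℕ) (e : ℤ) (he : e ≠ 0) (h : ∀ a ∈ A', e * (a : ℤ) ∈ A) (k : ℕ) :
    (k • A').card ≤ (k • A).card := by
  have hmem : ∀ x ∈ k • A', e * (x : ℤ) ∈ k • A := by
    induction k with
    | zero => simp
    | succ k ih =>
      intro x hx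
      rw [succ_nsmul] at hx ⊢
      obtain ⟨y, hy, z, hz, rfl⟩ := Finset.mem_add.1 hx
      push_cast
      rw [mul_add]
      exact Finset.add_mem_add (ih y hy) (h z hz)
  apply Finset.card_le_card_of_injOn (fun x : ℕ => e * (x : ℤ)) hmem
  intro x _ y _ hxy
  simpa [he] using hxy

lemma pow_transfer (A : Finset ℤ) (A' : Finset ℕ) (e : ℤ) (he : e ≠ 0) (h : ∀ a ∈ A', e * (a : ℤ) ∈ A) (k : ℕ) :
    (A' ^ k).card ≤ (A ^ k).card := by
  have hmem : ∀ x ∈ A' ^ k, e ^ k * (x : ℤ) ∈ A ^ k := by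
    induction k with
    | zero => simp
    | succ k ih =>
      intro x hx
      rw [pow_succ] at hx ⊢
      obtain ⟨y, hy, z, hz, rfl⟩ := Finset.mem_mul.1 hx
      push_cast
      have : e ^ (k + 1) * ((y : ℤ) * z) = (e ^ k * y) * (e * z) := by ring
      rw [this]
      exact Finset.mul_mem_mul (ih y hy) (h z hz)
  apply Finset.card_le_card_of_injOn (fun x : ℕ => e ^ k * (x : ℤ)) hmem
  intro x _ y _ hxy
  simpa [he] using hxy

end KFold

theorem kfold_sum_or_product (b : ℕ) (hb : 0 < b) :
    ∃ k : ℕ, 0 < k ∧ ∀ A : Finset ℤ, 2 ≤ A.card →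
      (A.card : ℕ) ^ b < (k • A).card ∨ (A.card : ℕ) ^ b < (A ^ k).card := by
  obtain ⟨m, l, hml⟩ := KFold.core (3 * b) (by omega)
  have h3 : 0 < 3 ^ b := by positivity
  have h2l : 0 < 2 ^ l := by positivity
  refine ⟨m + 2 ^ l + 3 ^ b, by omega, ?_⟩
  set k := m + 2 ^ l + 3 ^ b with hk
  intro A hA
  have hne : A.Nonempty := Finset.card_pos.1 (by omega)
  by_cases h4 : A.card ≤ 3
  · left
    have h1 := KFold.card_nsmul_ge A hA k
    have h2 : A.card ^ b ≤ 3 ^ b := Nat.pow_le_pow_left h4 b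
    omega
  · obtain ⟨A', e, he, h0, hmem, hcard⟩ := KFold.exists_half A
    have h2 : 2 ≤ A'.card := by omega
    have hA'ne : A'.Nonempty := Finset.card_pos.1 (by omega)
    have hle : A.card ^ b ≤ A'.card ^ (3 * b) := by
      rw [pow_mul]
      apply Nat.pow_le_pow_left
      refine hcard.trans ?_
      have : 4 ≤ A'.card ^ 2 := by nlinarith
      calc 2 * A'.card + 1 ≤ 4 * A'.card := by omega
        _ ≤ A'.card ^ 2 * A'.card := Nat.mul_le_mul_right _ this
        _ = _ := by ring
    rcases hml A' h0 h2 with h | h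
    · left
      refine (hle.trans_lt h).trans_le ((KFold.nsmul_transfer A A' e he hmem m).trans ?_)
      exact hne.card_nsmul_mono (by omega : m ≤ k)
    · right
      refine (hle.trans_lt h).trans_le (le_trans ?_ (KFold.pow_transfer A A' e he hmem k))
      exact KFold.card_pow_mono A' h0 hA'ne (by omega : 2 ^ l ≤ k)
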